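/- Let (C,p,Q) be a Brascamp–Lieb datum such that dim V ≤ ∑_{j=1}^m p_j dim(C_j V) for every subspace V ⊆ ℝⁿ. Then BL(C,p,Q) < +∞. If moreover the datum is simple, i.e. no nonzero subspace V satisfies dim V = ∑ⱼ p_j dim(C_j V), then the datum is Gaussian-extremizable: there exist symmetric matrices B_j with 0 < B_j ≤ Q_j such that BL(C,p,Q)² = ∏_{j=1}^m det(B_j)^{p_j} / det(∑_{j=1}^m p_j C_jᵀ B_j C_j). -/

import Mathlib

open MeasureTheory Matrix Module
open scoped ENNReal

noncomputable section

/-- The regularized Brascamp–Lieb constant of a datum `(C, p, Q)`. -/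
def BLconst {n m : ℕ} {ni : Fin m → ℕ} (C : ∀ i, Matrix (Fin (ni i)) (Fin n) ℝ)
    (p : Fin m → ℝ) (Q : ∀ i, Matrix (Fin (ni i)) (Fin (ni i)) ℝ) : ℝ≥0∞ :=
  ⨆ (B : ∀ i, Matrix (Fin (ni i)) (Fin (ni i)) ℝ)
    (_ : ∀ i, (B i).PosDef ∧ (Q i - B i).PosSemidef),
    ((∏ i, ENNReal.ofReal ((B i).det) ^ p i) /
        ENNReal.ofReal ((∑ i, p i • ((C i)ᵀ * B i * C i)).det)) ^ ((2 : ℝ)⁻¹)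

namespace Matrix

theorem PosSemidef.sq_apply_le {ι : Type*} {G : Matrix ι ι ℝ} (hG : G.PosSemidef) (a b : ι) :
    G a b ^ 2 ≤ G a a * G b b := by
  have h := (hG.submatrix ![a, b]).det_nonneg
  have hs : G b a = G a b := by simpa using hG.isHermitian.apply a b
  rw [det_fin_two] at h
  simp only [submatrix_apply, cons_val_zero, cons_val_one, hs] at h
  nlinarith

theorem PosSemidef.apply_abs_le_sqrt {ι : Type*} {G : Matrix ι ι ℝ} (hG : G.PosSemidef)
    {d : ι → ℝ} (hd : ∀ a, G a a ≤ d a) (a b : ι) : |G a b| ≤ √(d a) * √(d b) := by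
  rw [← Real.sqrt_mul (hG.diag_nonneg.trans (hd a))]
  refine Real.abs_le_sqrt ((hG.sq_apply_le a b).trans ?_)
  exact mul_le_mul (hd a) (hd b) hG.diag_nonneg (hG.diag_nonneg.trans (hd a))

/-- A weak form of Hadamard's inequality. -/
theorem PosSemidef.det_le_factorial_mul_prod {ι : Type*} [Fintype ι] [DecidableEq ι]
    {G : Matrix ι ι ℝ} (hG : G.PosSemidef) {d : ι → ℝ} (hd : ∀ a, G a a ≤ d a) :
    G.det ≤ (Fintype.card ι).factorial * ∏ a, d a := by
  have hd0 : ∀ a, 0 ≤ d a := fun a => hG.diag_nonneg.trans (hd a)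
  rw [det_apply]
  calc ∑ σ : Equiv.Perm ι, Equiv.Perm.sign σ • ∏ a, G (σ a) a
      ≤ ∑ σ : Equiv.Perm ι, ∏ a, d a := by
        refine Finset.sum_le_sum fun σ _ => (le_abs_self _).trans ?_
        rw [Units.smul_def, zsmul_eq_mul, abs_mul, ← Int.cast_abs,
          Int.isUnit_iff_abs_eq.1 (Units.isUnit _), Int.cast_one, one_mul, Finset.abs_prod]
        calc ∏ a, |G (σ a) a| ≤ ∏ a, √(d (σ a)) * √(d a) :=
              Finset.prod_le_prod (fun _ _ => abs_nonneg _)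
                fun a _ => hG.apply_abs_le_sqrt hd _ _
          _ = ∏ a, d a := by
              rw [Finset.prod_mul_distrib, Equiv.prod_comp σ fun a => √(d a),
                ← Finset.prod_mul_distrib]
              exact Finset.prod_congr rfl fun a _ => Real.mul_self_sqrt (hd0 a)
    _ = (Fintype.card ι).factorial * ∏ a, d a := by
        simp [Finset.card_univ, Fintype.card_perm]

theorem IsHermitian.exists_monotone_diagonalization {n : ℕ} {M : Matrix (Fin n) (Fin n) ℝ}
    (hM : M.IsHermitian) :
    ∃ (U : Matrix (Fin n) (Fin n) ℝ) (μ : Fin n → ℝ),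
      Uᵀ * U = 1 ∧ Monotone μ ∧ Uᵀ * M * U = diagonal μ := by
  set σ := Tuple.sort hM.eigenvalues
  set W : Matrix (Fin n) (Fin n) ℝ := (hM.eigenvectorUnitary).1
  have hW : Wᵀ * W = 1 := by
    have := Unitary.coe_star_mul_self hM.eigenvectorUnitary
    rwa [star_eq_conjTranspose, conjTranspose_eq_transpose_of_trivial] at this
  have hMW : Wᵀ * M * W = diagonal hM.eigenvalues := by
    have h := hM.spectral_theorem
    rw [Unitary.conjStarAlgAut_apply, ← Unitary.coe_star, Unitary.coe_star, star_eq_conjTranspose,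
      conjTranspose_eq_transpose_of_trivial] at h
    conv_lhs => rw [h]
    change Wᵀ * (W * diagonal hM.eigenvalues * Wᵀ) * W = _
    rw [← Matrix.mul_assoc, ← Matrix.mul_assoc, hW, Matrix.one_mul, Matrix.mul_assoc, hW,
      Matrix.mul_one]
  refine ⟨W.submatrix id σ, hM.eigenvalues ∘ σ, ?_, Tuple.monotone_sort _, ?_⟩
  · have : (Wᵀ * W).submatrix σ σ = 1 := by rw [hW]; exact submatrix_one_equiv σ
    rw [← this]
    rfl
  · have : (Wᵀ * M * W).submatrix σ σ = diagonal (hM.eigenvalues ∘ σ) := by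
      rw [hMW, submatrix_diagonal_equiv]
    rw [← this]
    rfl

theorem isCompact_setOf_transpose_mul_self_eq_one (n : ℕ) :
    IsCompact {U : Matrix (Fin n) (Fin n) ℝ | Uᵀ * U = 1} := by
  have hK : IsCompact (Set.univ.pi fun _ : Fin n => Set.univ.pi fun _ : Fin n =>
      Set.Icc (-1 : ℝ) 1) := isCompact_univ_pi fun _ => isCompact_univ_pi fun _ => isCompact_Icc
  refine hK.of_isClosed_subset (isClosed_eq (by fun_prop) continuous_const) ?_
  intro (U : Matrix (Fin n) (Fin n) ℝ) hU i _ j _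
  have h : (Matrix.transpose U * U : Matrix (Fin n) (Fin n) ℝ) j j = 1 := by
    rw [show Matrix.transpose U * U = 1 from hU, one_apply_eq]
  rw [mul_apply] at h
  have h2 : U i j ^ 2 ≤ 1 := by
    rw [← h]
    simp only [transpose_apply, ← sq]
    exact Finset.single_le_sum (f := fun x => U x j ^ 2) (fun _ _ => sq_nonneg _)
      (Finset.mem_univ i)
  exact abs_le.1 ((sq_le_one_iff_abs_le_one _).1 h2)

end Matrix

/-- Summation by parts. -/
theorem sum_mul_nonneg_of_antitone {n : ℕ} {f a : Fin n → ℝ} (hf : Antitone f)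
    (hf0 : ∀ k, 0 ≤ f k) (ha : ∀ j : ℕ, 0 ≤ ∑ k : Fin n with k.1 < j, a k) :
    0 ≤ ∑ k, a k * f k := by
  set F : ℕ → ℝ := fun k => if h : k < n then f ⟨k, h⟩ else 0 with hF
  have hF0 : ∀ k, 0 ≤ F k := fun k => by simp only [hF]; split_ifs; exacts [hf0 _, le_rfl]
  have hFa : ∀ k, F (k + 1) ≤ F k := fun k => by
    by_cases h : k + 1 < n
    · simp only [hF, h, (Nat.lt_succ_self k).trans h, dif_pos]
      exact hf (by simp)
    · simp only [hF, h, dif_neg, not_false_iff]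
      exact hF0 k
  have key : ∀ j : ℕ, (∑ k : Fin n with k.1 < j, a k) * F j ≤
      ∑ k : Fin n with k.1 < j, a k * f k := by
    intro j
    induction j with
    | zero => simp
    | succ j ih =>
      refine (mul_le_mul_of_nonneg_left (hFa j) (ha _)).trans ?_
      by_cases h : j < n
      · have hs : (Finset.univ.filter fun k : Fin n => k.1 < j + 1) =
            insert ⟨j, h⟩ (Finset.univ.filter fun k : Fin n => k.1 < j) := by
          ext k; simp [Fin.ext_iff]; omega
        rw [hs, Finset.sum_insert (by simp), Finset.sum_insert (by simp), add_mul]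
        simp only [hF, h, dif_pos] at ih ⊢
        linarith
      · have hs : (Finset.univ.filter fun k : Fin n => k.1 < j + 1) =
            (Finset.univ.filter fun k : Fin n => k.1 < j) := by
          ext k; simp; omega
        rw [hs]; exact ih
  have h := key n
  simp only [Fin.is_lt, Finset.filter_true] at h
  refine le_trans (mul_nonneg ?_ (hF0 n)) h
  simpa using ha n

/-- Greedy selection of a basis of columns. -/
theorem exists_linearIndepOn_span_initial {n : ℕ} {E : Type*} [AddCommGroup E] [Module ℝ E]
    (v : Fin n → E) :
    ∃ S : Finset (Fin n), LinearIndepOn ℝ v (S : Set (Fin n)) ∧ ∀ j : ℕ,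
      Submodule.span ℝ (v '' {k | k ∈ S ∧ k.1 < j}) = Submodule.span ℝ (v '' {k | k.1 < j}) := by
  classical
  set S : Finset (Fin n) :=
    Finset.univ.filter fun k => v k ∉ Submodule.span ℝ (v '' {l | l.1 < k.1}) with hS
  have key : ∀ j : ℕ, LinearIndepOn ℝ v {k | k ∈ S ∧ k.1 < j} ∧
      Submodule.span ℝ (v '' {k | k ∈ S ∧ k.1 < j}) = Submodule.span ℝ (v '' {k | k.1 < j}) := by
    intro j
    induction j with
    | zero => simp
    | succ j ih =>
      by_cases h : j < n
      · have h1 : {k : Fin n | k.1 < j + 1} = insert ⟨j, h⟩ {k : Fin n | k.1 < j} := by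
          ext k; simp [Fin.ext_iff]; omega
        by_cases hj : (⟨j, h⟩ : Fin n) ∈ S
        · have h2 : {k | k ∈ S ∧ k.1 < j + 1} = insert ⟨j, h⟩ {k | k ∈ S ∧ k.1 < j} := by
            ext k
            simp only [Set.mem_ofPred_eq, Set.mem_insert_iff]
            constructor
            · rintro ⟨ha, hb⟩
              rcases Nat.lt_succ_iff_lt_or_eq.1 hb with hb | hb
              · exact Or.inr ⟨ha, hb⟩
              · exact Or.inl (Fin.ext hb)
            · rintro (rfl | ⟨ha, hb⟩)
              · exact ⟨hj, Nat.lt_succ_self _⟩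
              · exact ⟨ha, by omega⟩
          rw [h1, h2, Set.image_insert_eq, Set.image_insert_eq, Submodule.span_insert,
            Submodule.span_insert, ih.2]
          refine ⟨ih.1.insert ?_, rfl⟩
          rw [ih.2]
          exact (Finset.mem_filter.1 hj).2
        · have h2 : {k | k ∈ S ∧ k.1 < j + 1} = {k | k ∈ S ∧ k.1 < j} := by
            ext k
            simp only [Set.mem_ofPred_eq]
            refine and_congr_right fun ha => ⟨fun hb => ?_, fun hb => by omega⟩
            rcases Nat.lt_succ_iff_lt_or_eq.1 hb with hb | hb
            · exact hb
            · exact absurd ((Fin.ext hb : k = ⟨j, h⟩) ▸ ha) hj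
          have hm : v ⟨j, h⟩ ∈ Submodule.span ℝ (v '' {k | k.1 < j}) := by
            by_contra hc
            exact hj (Finset.mem_filter.2 ⟨Finset.mem_univ _, hc⟩)
          rw [h1, h2, Set.image_insert_eq, Submodule.span_insert_eq_span hm]
          exact ih
      · have h1 : {k : Fin n | k.1 < j + 1} = {k : Fin n | k.1 < j} := by
          ext k; simp; omega
        have h2 : {k | k ∈ S ∧ k.1 < j + 1} = {k | k ∈ S ∧ k.1 < j} := by
          ext k; simp; omega
        rw [h1, h2]; exact ih
  refine ⟨S, ?_, fun j => (key j).2⟩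
  simpa using (key n).1

theorem Matrix.exists_det_submatrix_ne_zero {r n : ℕ} (D : Matrix (Fin r) (Fin n) ℝ)
    (hD : Submodule.span ℝ (Set.range D.col) = ⊤) :
    ∃ e : Fin r → Fin n, (D.submatrix id e).det ≠ 0 ∧ ∀ j : ℕ,
      finrank ℝ (Submodule.span ℝ (D.col '' {k | k.1 < j})) ≤
        (Finset.univ.filter fun a => (e a).1 < j).card := by
  classical
  obtain ⟨S, hS, hspan⟩ := exists_linearIndepOn_span_initial D.col
  have htop : Submodule.span ℝ (D.col '' (S : Set (Fin n))) = ⊤ := by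
    have := hspan n
    simp only [Fin.is_lt, and_true, Set.ofPred_true, Set.image_univ] at this
    rw [← hD, ← this]; rfl
  have hcard : S.card = r := by
    have h := finrank_span_eq_card hS
    have hr : Set.range (fun x : (S : Set (Fin n)) => D.col x) = D.col '' S := by
      rw [Set.image_eq_range]
    rw [hr, htop] at h
    simpa using h.symm
  set e : Fin r → Fin n := fun a => S.orderIsoOfFin hcard a with he
  refine ⟨e, ?_, fun j => ?_⟩
  · have hli : LinearIndependent ℝ (D.submatrix id e).col :=
      hS.comp (S.orderIsoOfFin hcard) (S.orderIsoOfFin hcard).injective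
    rw [linearIndependent_cols_iff_isUnit, isUnit_iff_isUnit_det] at hli
    exact hli.ne_zero
  · rw [← hspan j]
    have him : D.col '' {k | k ∈ S ∧ k.1 < j} =
        ((Finset.univ.filter fun a => (e a).1 < j).image fun a => D.col (e a) : Finset _) := by
      ext x
      simp only [Set.mem_image, Set.mem_ofPred_eq, Finset.coe_image, Finset.coe_filter,
        Finset.mem_univ, true_and]
      constructor
      · rintro ⟨k, ⟨hk, hkj⟩, rfl⟩
        refine ⟨(S.orderIsoOfFin hcard).symm ⟨k, hk⟩, ?_, ?_⟩ <;>
          simp only [he, OrderIso.apply_symm_apply]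
        exact hkj
      · rintro ⟨a, ha, rfl⟩
        exact ⟨e a, ⟨(S.orderIsoOfFin hcard a).2, ha⟩, rfl⟩
    rw [him]
    exact (finrank_span_finset_le_card _).trans Finset.card_image_le

section BrascampLieb

variable {n m : ℕ} {ni : Fin m → ℕ}

/-- A choice of columns `e i` for each `i` is balanced when, for each `j`, the weighted number of
chosen columns among the first `j` ones is at least `t` times the number of these columns. -/
def IsBalanced (p : Fin m → ℝ) (t : ℝ) (e : ∀ i, Fin (ni i) → Fin n) : Prop :=
  ∀ j : ℕ, t * (Finset.univ.filter fun k : Fin n => k.1 < j).card ≤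
    ∑ i, p i * (Finset.univ.filter fun a => (e i a).1 < j).card

theorem IsBalanced.mul_sum_le {p : Fin m → ℝ} {t : ℝ} {e : ∀ i, Fin (ni i) → Fin n}
    (he : IsBalanced p t e) {f : Fin n → ℝ} (hf : Antitone f) (hf0 : ∀ k, 0 ≤ f k) :
    t * ∑ k, f k ≤ ∑ i, p i * ∑ a, f (e i a) := by
  have hcount : ∀ g : Fin n → ℝ, ∑ k, (∑ i, p i * ∑ a, (if e i a = k then (1 : ℝ) else 0)) * g k =
      ∑ i, p i * ∑ a, g (e i a) := by
    intro g
    simp_rw [Finset.sum_mul, mul_assoc, Finset.sum_mul]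
    rw [Finset.sum_comm]
    refine Finset.sum_congr rfl fun i _ => ?_
    rw [← Finset.mul_sum, Finset.sum_comm]
    simp
  have h := sum_mul_nonneg_of_antitone (a := fun k =>
    (∑ i, p i * ∑ a, (if e i a = k then (1 : ℝ) else 0)) - t) hf hf0 fun j => by
      have h1 := hcount fun k => if k.1 < j then 1 else 0
      have h2 := he j
      simp only [mul_ite, mul_one, mul_zero] at h1
      rw [Finset.sum_sub_distrib, Finset.sum_filter, h1]
      simp only [Finset.sum_const, nsmul_eq_mul, Finset.sum_boole]
      linarith
  simp only [sub_mul] at h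
  rw [Finset.sum_sub_distrib, hcount, ← Finset.mul_sum] at h
  linarith

theorem IsBalanced.prod_rpow_le {p : Fin m → ℝ} {t : ℝ} {e : ∀ i, Fin (ni i) → Fin n}
    (he : IsBalanced p t e) {μ : Fin n → ℝ} {K : ℝ} (hμ : Monotone μ) (hμ0 : ∀ k, 0 < μ k)
    (hμK : ∀ k, μ k ≤ K) :
    ∏ i, (∏ a, μ (e i a)) ^ p i ≤
      Real.exp (∑ i, p i * (ni i * Real.log K) - t * (n * Real.log K)) * (∏ k, μ k) ^ t := by
  have h := he.mul_sum_le (f := fun k => Real.log K - Real.log (μ k))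
    (fun a b hab => sub_le_sub_left (Real.log_le_log (hμ0 a) (hμ hab)) _)
    (fun k => sub_nonneg.2 (Real.log_le_log (hμ0 k) (hμK k)))
  simp only [Finset.sum_sub_distrib, mul_sub, Finset.sum_const, Finset.card_univ,
    Fintype.card_fin, nsmul_eq_mul] at h
  have hl : ∏ i, (∏ a, μ (e i a)) ^ p i =
      Real.exp (∑ i, p i * ∑ a, Real.log (μ (e i a))) := by
    rw [Real.exp_sum]
    refine Finset.prod_congr rfl fun i _ => ?_
    rw [Real.rpow_def_of_pos (Finset.prod_pos fun a _ => hμ0 _),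
      Real.log_prod fun a _ => (hμ0 _).ne', mul_comm]
  rw [hl, Real.rpow_def_of_pos (Finset.prod_pos fun a _ => hμ0 _),
    Real.log_prod fun a _ => (hμ0 _).ne', ← Real.exp_add, Real.exp_le_exp]
  linarith

theorem exists_isBalanced (C : ∀ i, Matrix (Fin (ni i)) (Fin n) ℝ)
    (hC : ∀ i, Function.Surjective (C i).mulVec) {p : Fin m → ℝ} (hp : ∀ i, 0 < p i) {t : ℝ}
    (hdim : ∀ V : Submodule ℝ (Fin n → ℝ),
      t * (finrank ℝ V : ℝ) ≤ ∑ j, p j * (finrank ℝ (V.map (C j).mulVecLin) : ℝ))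
    {U : Matrix (Fin n) (Fin n) ℝ} (hU : Uᵀ * U = 1) :
    ∃ e : ∀ i, Fin (ni i) → Fin n, IsBalanced p t e ∧
      ∀ i, ((C i * U).submatrix id (e i)).det ≠ 0 := by
  have hUli : LinearIndependent ℝ U.col :=
    linearIndependent_cols_iff_isUnit.2 (IsUnit.of_mul_eq_one_right _ hU)
  have hmap : ∀ i (s : Set (Fin n)), Submodule.span ℝ ((C i * U).col '' s) =
      (Submodule.span ℝ (U.col '' s)).map (C i).mulVecLin := fun i s => by
    rw [Submodule.map_span, Set.image_image]
    rfl
  have hspan : ∀ i, Submodule.span ℝ (Set.range (C i * U).col) = ⊤ := fun i => by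
    rw [← Set.image_univ, hmap, Set.image_univ, hUli.span_eq_top_of_card_eq_finrank' (by simp),
      Submodule.map_top]
    exact LinearMap.range_eq_top.2 (hC i)
  choose e hdet he using fun i => (C i * U).exists_det_submatrix_ne_zero (hspan i)
  refine ⟨e, fun j => ?_, hdet⟩
  have hrank : finrank ℝ (Submodule.span ℝ (U.col '' {k | k.1 < j})) =
      (Finset.univ.filter fun k : Fin n => k.1 < j).card := by
    have h := finrank_span_eq_card (hUli.linearIndepOn (s := {k : Fin n | k.1 < j}))
    rw [Set.image_eq_range]
    rw [Fintype.card_subtype] at h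
    convert h using 2
    ext k
    simp
  have h := hdim (Submodule.span ℝ (U.col '' {k | k.1 < j}))
  rw [hrank] at h
  refine h.trans (Finset.sum_le_sum fun i _ => mul_le_mul_of_nonneg_left ?_ (hp i).le)
  rw [← hmap]
  exact_mod_cast he i j

theorem exists_uniform_isBalanced (C : ∀ i, Matrix (Fin (ni i)) (Fin n) ℝ)
    (hC : ∀ i, Function.Surjective (C i).mulVec) {p : Fin m → ℝ} (hp : ∀ i, 0 < p i) {t : ℝ}
    (hdim : ∀ V : Submodule ℝ (Fin n → ℝ),
      t * (finrank ℝ V : ℝ) ≤ ∑ j, p j * (finrank ℝ (V.map (C j).mulVecLin) : ℝ)) :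
    ∃ c > 0, ∀ U : Matrix (Fin n) (Fin n) ℝ, Uᵀ * U = 1 →
      ∃ e : ∀ i, Fin (ni i) → Fin n, IsBalanced p t e ∧
        c ≤ ∏ i, (((C i * U).submatrix id (e i)).det ^ 2) ^ p i := by
  classical
  set T : Finset (∀ i, Fin (ni i) → Fin n) := Finset.univ.filter fun e => IsBalanced p t e
  set w : (∀ i, Fin (ni i) → Fin n) → Matrix (Fin n) (Fin n) ℝ → ℝ :=
    fun e U => ∏ i, (((C i * U).submatrix id (e i)).det ^ 2) ^ p i
  have hw0 : ∀ e U, 0 ≤ w e U := fun e U =>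
    Finset.prod_nonneg fun i _ => Real.rpow_nonneg (sq_nonneg _) _
  have hwc : ∀ e, Continuous (w e) := fun e =>
    continuous_finsetProd _ fun i _ => Continuous.rpow_const
      (((continuous_const.matrix_mul continuous_id).matrix_submatrix _ _).matrix_det.pow 2)
      fun _ => Or.inr (hp i).le
  have hpos : ∀ U : Matrix (Fin n) (Fin n) ℝ, Uᵀ * U = 1 → 0 < ∑ e ∈ T, w e U := by
    intro U hU
    obtain ⟨e, he, hdet⟩ := exists_isBalanced C hC hp hdim hU
    refine Finset.sum_pos' (fun e _ => hw0 e U) ⟨e, by simp [T, he], ?_⟩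
    exact Finset.prod_pos fun i _ => Real.rpow_pos_of_pos (by have := hdet i; positivity) _
  obtain ⟨U₀, hU₀, hmin⟩ := (isCompact_setOf_transpose_mul_self_eq_one n).exists_isMinOn
    ⟨1, by simp⟩ (continuous_finsetSum T fun e _ => hwc e).continuousOn
  have hT : T.Nonempty := by
    obtain ⟨e, he, -⟩ := exists_isBalanced C hC hp hdim hU₀
    exact ⟨e, by simp [T, he]⟩
  have hTc : (0 : ℝ) < T.card := by exact_mod_cast hT.card_pos
  refine ⟨(∑ e ∈ T, w e U₀) / T.card, div_pos (hpos U₀ hU₀) hTc, fun U hU => ?_⟩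
  obtain ⟨e, he, hle⟩ := Finset.exists_le_of_sum_le (s := T)
    (f := fun _ => (∑ e ∈ T, w e U₀) / T.card) (g := fun e => w e U) hT (by
      rw [Finset.sum_const, nsmul_eq_mul, mul_div_cancel₀ _ hTc.ne']
      exact hmin hU)
  exact ⟨e, (Finset.mem_filter.1 he).2, hle⟩

/-- The matrix `∑ᵢ pᵢ Cᵢᵀ Bᵢ Cᵢ`. -/
def blForm (C : ∀ i, Matrix (Fin (ni i)) (Fin n) ℝ) (p : Fin m → ℝ)
    (B : ∀ i, Matrix (Fin (ni i)) (Fin (ni i)) ℝ) : Matrix (Fin n) (Fin n) ℝ :=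
  ∑ i, p i • ((C i)ᵀ * B i * C i)

theorem Matrix.PosSemidef.transpose_mul_mul_same {r s : ℕ} {B : Matrix (Fin r) (Fin r) ℝ}
    (hB : B.PosSemidef) (D : Matrix (Fin r) (Fin s) ℝ) : (Dᵀ * B * D).PosSemidef := by
  simpa [conjTranspose_eq_transpose_of_trivial] using hB.conjTranspose_mul_mul_same D

theorem posSemidef_blForm (C : ∀ i, Matrix (Fin (ni i)) (Fin n) ℝ) {p : Fin m → ℝ}
    (hp : ∀ i, 0 < p i) {B : ∀ i, Matrix (Fin (ni i)) (Fin (ni i)) ℝ}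
    (hB : ∀ i, (B i).PosSemidef) : (blForm C p B).PosSemidef :=
  posSemidef_sum _ fun i _ => ((hB i).transpose_mul_mul_same (C i)).smul (hp i).le

theorem posDef_blForm {C : ∀ i, Matrix (Fin (ni i)) (Fin n) ℝ}
    (hker : ∀ x : Fin n → ℝ, (∀ i, (C i).mulVec x = 0) → x = 0) {p : Fin m → ℝ}
    (hp : ∀ i, 0 < p i) {B : ∀ i, Matrix (Fin (ni i)) (Fin (ni i)) ℝ}
    (hB : ∀ i, (B i).PosDef) : (blForm C p B).PosDef := by
  refine PosDef.of_dotProduct_mulVec_pos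
    (posSemidef_blForm C hp fun i => (hB i).posSemidef).isHermitian fun x hx => ?_
  have hform : star x ⬝ᵥ (blForm C p B *ᵥ x) =
      ∑ i, p i * (star ((C i) *ᵥ x) ⬝ᵥ (B i *ᵥ ((C i) *ᵥ x))) := by
    simp only [blForm, sum_mulVec, dotProduct_sum, smul_mulVec, dotProduct_smul, smul_eq_mul,
      star_trivial]
    refine Finset.sum_congr rfl fun i _ => ?_
    rw [← mulVec_mulVec, ← mulVec_mulVec, dotProduct_mulVec, vecMul_transpose]
  rw [hform]
  obtain ⟨i, hi⟩ : ∃ i, (C i).mulVec x ≠ 0 := by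
    by_contra! h
    exact hx (hker x h)
  exact Finset.sum_pos' (fun i _ => mul_nonneg (hp i).le
    ((hB i).posSemidef.dotProduct_mulVec_nonneg _))
    ⟨i, Finset.mem_univ i, mul_pos (hp i) ((hB i).dotProduct_mulVec_pos hi)⟩

/-- The key bound: if `t dim V ≤ ∑ⱼ pⱼ dim (Cⱼ V)` for all `V`, then `∏ᵢ det(Bᵢ)^pᵢ` is controlled
by the `t`-th power of `det (∑ᵢ pᵢ Cᵢᵀ Bᵢ Cᵢ)`. -/
theorem exists_prod_det_rpow_le {C : ∀ i, Matrix (Fin (ni i)) (Fin n) ℝ}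
    (hC : ∀ i, Function.Surjective (C i).mulVec)
    (hker : ∀ x : Fin n → ℝ, (∀ i, (C i).mulVec x = 0) → x = 0)
    {p : Fin m → ℝ} (hp : ∀ i, 0 < p i) {Q : ∀ i, Matrix (Fin (ni i)) (Fin (ni i)) ℝ} {t : ℝ}
    (hdim : ∀ V : Submodule ℝ (Fin n → ℝ),
      t * (finrank ℝ V : ℝ) ≤ ∑ j, p j * (finrank ℝ (V.map (C j).mulVecLin) : ℝ)) :
    ∃ A > 0, ∀ B : ∀ i, Matrix (Fin (ni i)) (Fin (ni i)) ℝ,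
      (∀ i, (B i).PosDef ∧ (Q i - B i).PosSemidef) →
        ∏ i, (B i).det ^ p i ≤ A * (blForm C p B).det ^ t := by
  obtain ⟨c, hc, hcU⟩ := exists_uniform_isBalanced C hC hp hdim
  set K := (blForm C p Q).trace
  set H := ∏ i, ((ni i).factorial * (p i)⁻¹ ^ ni i) ^ p i
  set X := Real.exp (∑ i, p i * (ni i * Real.log K) - t * (n * Real.log K))
  have hH : 0 < H := Finset.prod_pos fun i _ => Real.rpow_pos_of_pos (by
    have := hp i
    have := (ni i).factorial_pos
    positivity) _
  refine ⟨H * X / c, by positivity, fun B hB => ?_⟩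
  have hM := posDef_blForm hker hp fun i => (hB i).1
  obtain ⟨U, μ, hU, hμ, hUM⟩ := hM.isHermitian.exists_monotone_diagonalization
  have hdetU : U.det * U.det = 1 := by
    have := congrArg det hU
    rwa [det_mul, det_transpose, det_one] at this
  have hdetM : (blForm C p B).det = ∏ k, μ k := by
    have := congrArg det hUM
    rw [det_mul, det_mul, det_transpose, det_diagonal] at this
    linear_combination this - (blForm C p B).det * hdetU
  have hinj : Function.Injective U.mulVec :=
    mulVec_injective_of_isUnit (IsUnit.of_mul_eq_one_right _ hU)
  have hUMpos : (diagonal μ).PosDef := by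
    rw [← hUM, ← conjTranspose_eq_transpose_of_trivial]
    exact hM.conjTranspose_mul_mul_same hinj
  have hμ0 : ∀ k, 0 < μ k := posDef_diagonal_iff.1 hUMpos
  have hμK : ∀ k, μ k ≤ K := by
    intro k
    have h1 : (blForm C p B).trace = ∑ k, μ k := by
      have := congrArg trace hUM
      rwa [trace_diagonal, trace_mul_comm, ← Matrix.mul_assoc, mul_eq_one_comm.1 hU,
        Matrix.one_mul] at this
    have h2 : (blForm C p B).trace ≤ K := by
      have := (posSemidef_blForm C hp fun i => (hB i).2).trace_nonneg
      have h3 : blForm C p (fun i => Q i - B i) = blForm C p Q - blForm C p B := by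
        simp only [blForm, ← Finset.sum_sub_distrib, Matrix.mul_sub, Matrix.sub_mul, smul_sub]
      rw [h3, trace_sub] at this
      exact sub_nonneg.1 this
    exact (Finset.single_le_sum (fun k _ => (hμ0 k).le) (Finset.mem_univ k)).trans (h1 ▸ h2)
  obtain ⟨e, he, hce⟩ := hcU U hU
  set E := fun i => (C i * U).submatrix id (e i)
  have hdiag : ∀ i k, ((C i * U)ᵀ * B i * (C i * U)) k k ≤ μ k / p i := by
    intro i k
    have h1 : Uᵀ * blForm C p B * U = ∑ i, p i • ((C i * U)ᵀ * B i * (C i * U)) := by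
      simp only [blForm, Matrix.mul_sum, Matrix.sum_mul, Matrix.mul_smul, Matrix.smul_mul,
        transpose_mul, Matrix.mul_assoc]
    have h2 : μ k = ∑ i, p i * ((C i * U)ᵀ * B i * (C i * U)) k k := by
      have := congrFun (congrFun (hUM.symm.trans h1) k) k
      simpa [Matrix.sum_apply] using this
    rw [le_div_iff₀ (hp i), mul_comm, h2]
    exact Finset.single_le_sum
      (f := fun i => p i * ((C i * U)ᵀ * B i * (C i * U)) k k)
      (fun i _ => mul_nonneg (hp i).le
        ((hB i).1.posSemidef.transpose_mul_mul_same (C i * U)).diag_nonneg) (Finset.mem_univ i)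
  have hdet : ∀ i, (B i).det * (E i).det ^ 2 ≤
      ((ni i).factorial * (p i)⁻¹ ^ ni i) * ∏ a, μ (e i a) := by
    intro i
    have h := ((hB i).1.posSemidef.transpose_mul_mul_same (E i)).det_le_factorial_mul_prod
      (d := fun a => μ (e i a) / p i) fun a => hdiag i (e i a)
    rw [det_mul, det_mul, det_transpose, Fintype.card_fin] at h
    simp only [div_eq_mul_inv, Finset.prod_mul_distrib, Finset.prod_const, Finset.card_univ,
      Fintype.card_fin] at h
    linarith
  have hprod : (∏ i, (B i).det ^ p i) * ∏ i, ((E i).det ^ 2) ^ p i ≤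
      H * ∏ i, (∏ a, μ (e i a)) ^ p i := by
    rw [← Finset.prod_mul_distrib, ← Finset.prod_mul_distrib]
    refine Finset.prod_le_prod (fun i _ => mul_nonneg
      (Real.rpow_nonneg (hB i).1.det_pos.le _) (Real.rpow_nonneg (sq_nonneg _) _)) fun i _ => ?_
    rw [← Real.mul_rpow (hB i).1.det_pos.le (sq_nonneg _), ← Real.mul_rpow
      (by have := hp i; positivity) (Finset.prod_nonneg fun a _ => (hμ0 _).le)]
    exact Real.rpow_le_rpow (mul_nonneg (hB i).1.det_pos.le (sq_nonneg _)) (hdet i) (hp i).le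
  have hP0 : 0 ≤ ∏ i, (B i).det ^ p i :=
    Finset.prod_nonneg fun i _ => Real.rpow_nonneg (hB i).1.det_pos.le _
  rw [div_mul_eq_mul_div, le_div_iff₀ hc, hdetM, mul_assoc]
  calc (∏ i, (B i).det ^ p i) * c ≤ (∏ i, (B i).det ^ p i) * ∏ i, ((E i).det ^ 2) ^ p i :=
        mul_le_mul_of_nonneg_left hce hP0
    _ ≤ _ := hprod
    _ ≤ _ := mul_le_mul_of_nonneg_left (he.prod_rpow_le hμ hμ0 hμK) hH.le

theorem isCompact_setOf_posSemidef_le {r : ℕ} (Q : Matrix (Fin r) (Fin r) ℝ) :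
    IsCompact {B : Matrix (Fin r) (Fin r) ℝ | B.PosSemidef ∧ (Q - B).PosSemidef} := by
  have hclosed : IsClosed {B : Matrix (Fin r) (Fin r) ℝ | B.PosSemidef} := by
    simp only [posSemidef_iff_dotProduct_mulVec, IsHermitian, Set.ofPred_and, Set.ofPred_forall]
    exact (isClosed_eq (by fun_prop) continuous_id).inter
      (isClosed_iInter fun x => isClosed_le continuous_const (by fun_prop))
  have hK : IsCompact (Set.univ.pi fun a : Fin r => Set.univ.pi fun b : Fin r =>
      Set.Icc (-(√(Q a a) * √(Q b b))) (√(Q a a) * √(Q b b))) :=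
    isCompact_univ_pi fun _ => isCompact_univ_pi fun _ => isCompact_Icc
  refine hK.of_isClosed_subset
    (hclosed.inter (hclosed.preimage (continuous_const.sub continuous_id))) ?_
  rintro (B : Matrix (Fin r) (Fin r) ℝ) ⟨hB, hQB⟩ a - b -
  exact abs_le.1 (hB.apply_abs_le_sqrt (d := fun a => Q a a)
    (fun a => sub_nonneg.1 (hQB.diag_nonneg (i := a))) a b)

/-- The quotient `∏ᵢ det(Bᵢ)^pᵢ / det (∑ᵢ pᵢ Cᵢᵀ Bᵢ Cᵢ)`. -/
def blQuotient (C : ∀ i, Matrix (Fin (ni i)) (Fin n) ℝ) (p : Fin m → ℝ)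
    (B : ∀ i, Matrix (Fin (ni i)) (Fin (ni i)) ℝ) : ℝ :=
  (∏ i, (B i).det ^ p i) / (blForm C p B).det

theorem ofReal_blQuotient {C : ∀ i, Matrix (Fin (ni i)) (Fin n) ℝ}
    (hker : ∀ x : Fin n → ℝ, (∀ i, (C i).mulVec x = 0) → x = 0) {p : Fin m → ℝ}
    (hp : ∀ i, 0 < p i) {B : ∀ i, Matrix (Fin (ni i)) (Fin (ni i)) ℝ}
    (hB : ∀ i, (B i).PosDef) :
    ENNReal.ofReal (blQuotient C p B) = (∏ i, ENNReal.ofReal ((B i).det) ^ p i) /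
      ENNReal.ofReal ((∑ i, p i • ((C i)ᵀ * B i * C i)).det) := by
  rw [blQuotient, ENNReal.ofReal_div_of_pos (posDef_blForm hker hp hB).det_pos,
    ENNReal.ofReal_prod_of_nonneg fun i _ => Real.rpow_nonneg (hB i).det_pos.le _]
  simp only [ENNReal.ofReal_rpow_of_pos (hB _).det_pos, blForm]

theorem exists_one_lt_dim_mul_le {C : ∀ i, Matrix (Fin (ni i)) (Fin n) ℝ} {p : Fin m → ℝ}
    (hdim : ∀ V : Submodule ℝ (Fin n → ℝ), V ≠ ⊥ →
      (finrank ℝ V : ℝ) < ∑ j, p j * (finrank ℝ (V.map (C j).mulVecLin) : ℝ)) :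
    ∃ t > 1, ∀ V : Submodule ℝ (Fin n → ℝ),
      t * (finrank ℝ V : ℝ) ≤ ∑ j, p j * (finrank ℝ (V.map (C j).mulVecLin) : ℝ) := by
  set q : Submodule ℝ (Fin n → ℝ) → ℝ := fun V =>
    (∑ j, p j * (finrank ℝ (V.map (C j).mulVecLin) : ℝ)) / finrank ℝ V
  have hfin : (q '' {V | V ≠ ⊥}).Finite := by
    let d : Submodule ℝ (Fin n → ℝ) → Fin (n + 1) × ∀ j, Fin (ni j + 1) := fun V =>
      (⟨finrank ℝ V, Nat.lt_succ_of_le (V.finrank_le.trans (by simp))⟩, fun j =>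
        ⟨finrank ℝ (V.map (C j).mulVecLin),
          Nat.lt_succ_of_le ((Submodule.finrank_le _).trans (by simp))⟩)
    refine (Set.finite_range fun x : Fin (n + 1) × ∀ j, Fin (ni j + 1) =>
      (∑ j, p j * ((x.2 j).1 : ℝ)) / x.1.1).subset ?_
    rintro _ ⟨V, -, rfl⟩
    exact ⟨d V, rfl⟩
  have hpos : ∀ V : Submodule ℝ (Fin n → ℝ), V ≠ ⊥ → (0 : ℝ) < finrank ℝ V := fun V hV => by
    exact_mod_cast Nat.pos_of_ne_zero fun h => hV (Submodule.finrank_eq_zero.1 h)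
  obtain ⟨t, ht, htq⟩ : ∃ t > 1, ∀ V : Submodule ℝ (Fin n → ℝ), V ≠ ⊥ → t ≤ q V := by
    rcases (q '' {V | V ≠ ⊥}).eq_empty_or_nonempty with h | h
    · refine ⟨2, by norm_num, fun V hV => ?_⟩
      exact absurd (h ▸ Set.mem_image_of_mem q hV : q V ∈ (∅ : Set ℝ)) (Set.notMem_empty _)
    · obtain ⟨V, hV, hVt⟩ := h.csInf_mem hfin
      refine ⟨q V, (one_lt_div (hpos V hV)).2 (hdim V hV), fun W hW => ?_⟩
      rw [hVt]
      exact csInf_le hfin.bddBelow ⟨W, hW, rfl⟩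
  refine ⟨t, ht, fun V => ?_⟩
  by_cases hV : V = ⊥
  · subst hV
    have hbot : ∀ j, finrank ℝ ((⊥ : Submodule ℝ (Fin n → ℝ)).map (C j).mulVecLin) = 0 :=
      fun j => by rw [Submodule.map_bot, finrank_bot]
    simp [hbot]
  · exact (le_div_iff₀ (hpos V hV)).1 (htq V hV)

theorem exists_isMaxOn_blQuotient {C : ∀ i, Matrix (Fin (ni i)) (Fin n) ℝ}
    (hC : ∀ i, Function.Surjective (C i).mulVec)
    (hker : ∀ x : Fin n → ℝ, (∀ i, (C i).mulVec x = 0) → x = 0)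
    {p : Fin m → ℝ} (hp : ∀ i, 0 < p i) {Q : ∀ i, Matrix (Fin (ni i)) (Fin (ni i)) ℝ}
    (hQ : ∀ i, (Q i).PosDef) {t : ℝ} (ht : 1 < t)
    (hdim : ∀ V : Submodule ℝ (Fin n → ℝ),
      t * (finrank ℝ V : ℝ) ≤ ∑ j, p j * (finrank ℝ (V.map (C j).mulVecLin) : ℝ)) :
    ∃ B ∈ {B : ∀ i, Matrix (Fin (ni i)) (Fin (ni i)) ℝ |
        ∀ i, (B i).PosDef ∧ (Q i - B i).PosSemidef},
      IsMaxOn (blQuotient C p) {B | ∀ i, (B i).PosDef ∧ (Q i - B i).PosSemidef} B := by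
  obtain ⟨A, hA, hAB⟩ := exists_prod_det_rpow_le (Q := Q) hC hker hp hdim
  have hquot : ∀ B : ∀ i, Matrix (Fin (ni i)) (Fin (ni i)) ℝ,
      (∀ i, (B i).PosDef ∧ (Q i - B i).PosSemidef) →
        blQuotient C p B ≤ A * (blForm C p B).det ^ (t - 1) := fun B hB => by
    have hM := (posDef_blForm hker hp fun i => (hB i).1).det_pos
    rw [blQuotient, div_le_iff₀ hM, mul_assoc, ← Real.rpow_add_one hM.ne', sub_add_cancel]
    exact hAB B hB
  have hMQ := (posDef_blForm hker hp hQ).det_pos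
  have hq0 : 0 < blQuotient C p Q :=
    div_pos (Finset.prod_pos fun i _ => Real.rpow_pos_of_pos (hQ i).det_pos _) hMQ
  set η := min (blForm C p Q).det ((blQuotient C p Q / A) ^ (t - 1)⁻¹)
  have hη : 0 < η := lt_min hMQ (Real.rpow_pos_of_pos (div_pos hq0 hA) _)
  have hηA : A * η ^ (t - 1) ≤ blQuotient C p Q := by
    have h1 : η ^ (t - 1) ≤ blQuotient C p Q / A := by
      refine (Real.rpow_le_rpow hη.le (min_le_right _ _) (by linarith)).trans_eq ?_
      rw [← Real.rpow_mul (div_pos hq0 hA).le, inv_mul_cancel₀ (by linarith), Real.rpow_one]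
    rwa [le_div_iff₀ hA, mul_comm] at h1
  have hcontM : Continuous fun B => (blForm C p B).det := by
    unfold blForm
    fun_prop
  set S := {B : ∀ i, Matrix (Fin (ni i)) (Fin (ni i)) ℝ |
    (∀ i, (B i).PosSemidef ∧ (Q i - B i).PosSemidef) ∧ η ≤ (blForm C p B).det}
  have hS : IsCompact S := by
    have h := (isCompact_univ_pi fun i => isCompact_setOf_posSemidef_le (Q i)).inter_right
      (isClosed_le (continuous_const (y := η)) hcontM)
    convert h using 1
    ext B
    simp [S]
  have hcont : ContinuousOn (blQuotient C p) S := by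
    refine ContinuousOn.div (Continuous.continuousOn ?_) hcontM.continuousOn
      fun B hB => (hη.trans_le hB.2).ne'
    exact continuous_finsetProd _ fun i _ => Continuous.rpow_const
      (continuous_apply i).matrix_det fun _ => Or.inr (hp i).le
  have hQS : Q ∈ S :=
    ⟨fun i => ⟨(hQ i).posSemidef, by rw [sub_self]; exact PosSemidef.zero⟩, min_le_left _ _⟩
  obtain ⟨B, hBS, hmax⟩ := hS.exists_isMaxOn ⟨Q, hQS⟩ hcont
  have hQB : blQuotient C p Q ≤ blQuotient C p B := hmax hQS
  refine ⟨B, fun i => ⟨?_, (hBS.1 i).2⟩, fun B' hB' => ?_⟩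
  · rw [(hBS.1 i).1.posDef_iff_det_ne_zero]
    intro h0
    refine (hq0.trans_le hQB).ne' ?_
    rw [blQuotient, Finset.prod_eq_zero (Finset.mem_univ i)
      (by rw [h0, Real.zero_rpow (hp i).ne']), zero_div]
  · by_cases hd : η ≤ (blForm C p B').det
    · exact hmax ⟨fun i => ⟨(hB' i).1.posSemidef, (hB' i).2⟩, hd⟩
    · have hM := (posDef_blForm hker hp fun i => (hB' i).1).det_pos
      refine (hquot B' hB').trans (le_trans ?_ (hηA.trans hQB))
      exact mul_le_mul_of_nonneg_left
        (Real.rpow_le_rpow hM.le (not_le.1 hd).le (by linarith)) hA.le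

end BrascampLieb

/-- If the dimension conditions hold then the regularized Brascamp–Lieb constant
is finite; if moreover the datum is simple then it is Gaussian-extremizable. -/
theorem BLconst_lt_top_and_gaussian_extremizable_of_simple
    {n m : ℕ} (hm : 1 ≤ m) {ni : Fin m → ℕ}
    (C : ∀ i, Matrix (Fin (ni i)) (Fin n) ℝ)
    (hCsurj : ∀ i, Function.Surjective (C i).mulVec)
    (hker : ∀ x : Fin n → ℝ, (∀ i, (C i).mulVec x = 0) → x = 0)
    (p : Fin m → ℝ) (hp : ∀ i, 0 < p i)
    (Q : ∀ i, Matrix (Fin (ni i)) (Fin (ni i)) ℝ) (hQ : ∀ i, (Q i).PosDef)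
    (hdim : ∀ V : Submodule ℝ (Fin n → ℝ),
      (finrank ℝ V : ℝ) ≤ ∑ j, p j * (finrank ℝ (V.map (C j).mulVecLin) : ℝ)) :
    BLconst C p Q < ⊤ ∧
      ((∀ V : Submodule ℝ (Fin n → ℝ), V ≠ ⊥ →
          (finrank ℝ V : ℝ) ≠ ∑ j, p j * (finrank ℝ (V.map (C j).mulVecLin) : ℝ)) →
        ∃ B : ∀ i, Matrix (Fin (ni i)) (Fin (ni i)) ℝ,
          (∀ i, (B i).PosDef ∧ (Q i - B i).PosSemidef) ∧
            BLconst C p Q ^ (2 : ℕ) =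
              (∏ i, ENNReal.ofReal ((B i).det) ^ p i) /
                ENNReal.ofReal ((∑ i, p i • ((C i)ᵀ * B i * C i)).det)) := by
  refine ⟨?_, fun hsimple => ?_⟩
  · obtain ⟨A, -, hAB⟩ := exists_prod_det_rpow_le (Q := Q) (t := 1) hCsurj hker hp
      (by simpa using hdim)
    refine lt_of_le_of_lt (b := ENNReal.ofReal A ^ (2 : ℝ)⁻¹) (iSup₂_le fun B hB => ?_)
      (ENNReal.rpow_lt_top_of_nonneg (by norm_num) ENNReal.ofReal_ne_top)
    rw [← ofReal_blQuotient hker hp fun i => (hB i).1]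
    refine ENNReal.rpow_le_rpow (ENNReal.ofReal_le_ofReal ?_) (by norm_num)
    rw [blQuotient, div_le_iff₀ (posDef_blForm hker hp fun i => (hB i).1).det_pos]
    simpa using hAB B hB
  · obtain ⟨t, ht, hdimt⟩ := exists_one_lt_dim_mul_le fun V hV =>
      lt_of_le_of_ne (hdim V) (hsimple V hV)
    obtain ⟨B, hB, hmax⟩ := exists_isMaxOn_blQuotient hCsurj hker hp hQ ht hdimt
    refine ⟨B, hB, ?_⟩
    have hBL : BLconst C p Q = ENNReal.ofReal (blQuotient C p B) ^ (2 : ℝ)⁻¹ := by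
      refine le_antisymm (iSup₂_le fun B' hB' => ?_) ?_
      · rw [← ofReal_blQuotient hker hp fun i => (hB' i).1]
        exact ENNReal.rpow_le_rpow (ENNReal.ofReal_le_ofReal (hmax hB')) (by norm_num)
      · rw [ofReal_blQuotient hker hp fun i => (hB i).1]
        exact le_iSup₂_of_le B hB le_rfl
    rw [hBL, ← ofReal_blQuotient hker hp fun i => (hB i).1, ← ENNReal.rpow_natCast,
      ← ENNReal.rpow_mul]
    norm_num
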